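/- Let T be a tree on n vertices with diam(T) = 2d for an integer d ≥ 2, let u₀ be the center of T, and let u₁, …, u_l (l ≥ 2) be exactly those neighbours of u₀ such that e_{T_i}(u_i) = d−1, where T_i is the component of T − (⋃_{i=1}^l {u₀, u_i}) containing u_i. Then the rank of the eccentricity matrix 𝓔(T) equals 2l. -/

import Mathlib

open SimpleGraph Finset Matrix Polynomial

/-- The eccentricity of a vertex: the greatest distance from `u` to any vertex. -/
noncomputable def ecc {V : Type*} [Fintype V] (G : SimpleGraph V) (u : V) : ℕ :=
  Finset.univ.sup fun v => G.dist u v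

/-- The diameter of a graph: the greatest distance between any pair of vertices. -/
noncomputable def gdiam {V : Type*} [Fintype V] (G : SimpleGraph V) : ℕ :=
  Finset.univ.sup fun p : V × V => G.dist p.1 p.2

/-- The eccentricity matrix: `(u,v)` entry is `d(u,v)` if `d(u,v) = min (e u) (e v)`,
and `0` otherwise. -/
noncomputable def eccMatrix {V : Type*} [Fintype V] (G : SimpleGraph V) : Matrix V V ℝ :=
  Matrix.of fun u v =>
    if G.dist u v = min (ecc G u) (ecc G v) then (G.dist u v : ℝ) else 0

open Classical in
/-- The eccentricity of `u` within its connected component of `G`. -/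
noncomputable def eccWithin {V : Type*} [Fintype V] (G : SimpleGraph V) (u : V) : ℕ :=
  Finset.univ.sup fun v => if G.Reachable u v then G.dist u v else 0

/-- For a neighbour `v` of `u₀`, the eccentricity of `v` within the component containing `v`
of the graph obtained from `T` by deleting the edge `u₀v`. -/
noncomputable def branchEcc {V : Type*} [Fintype V] [DecidableEq V]
    (T : SimpleGraph V) (u₀ v : V) : ℕ :=
  eccWithin (T.deleteEdges {s(u₀, v)}) v

/-! Write `h x = d(u₀, x)`. Since deepest vertices occur in two different branches at `u₀`, every
vertex has eccentricity `d + h x`, so the `(x, y)` entry of the eccentricity matrix is `h x + h y`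
if `x` and `y` share no branch and one of them is deepest, and `0` otherwise. With
`D` the incidence matrix of deepest vertices in branches, this reads `D * Hᵀ + H * Dᵀ` for a
suitable `H` with `l` columns, so the rank is at most `2l`. Conversely, the vertices `uᵢ` together
with one deepest vertex per branch index a block triangular minor whose diagonal blocks are
multiples of the adjacency matrix of the complete graph on `l ≥ 2` vertices, which is nonsingular.
-/

theorem det_adjMatrix_completeGraph (ι R : Type*) [Fintype ι] [DecidableEq ι] [CommRing R] :
    ((completeGraph ι).adjMatrix R).det =
      (-1) ^ Fintype.card ι * (1 - (Fintype.card ι : R)) := by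
  have rank_one_update : (completeGraph ι).adjMatrix R =
      -(1 + replicateCol Unit (fun _ : ι => (-1 : R)) *
        replicateRow Unit (fun _ : ι => (1 : R))) := by
    rw [adjMatrix_completeGraph_eq_of_one_sub_one]
    ext i j
    simp [Matrix.mul_apply, sub_eq_add_neg]
  rw [rank_one_update, det_neg, det_one_add_replicateCol_mul_replicateRow]
  simp [dotProduct, sub_eq_add_neg]

section Distance

variable {V : Type*} {G : SimpleGraph V} {a b x y z : V}

theorem dist_add_dist_of_mem_support {p : G.Walk x y} (hp : p.length = G.dist x y)
    (hz : z ∈ p.support) : G.dist x z + G.dist z y = G.dist x y := by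
  classical
  rw [← length_eq_dist_of_subwalk hp (p.isSubwalk_takeUntil hz),
    ← length_eq_dist_of_subwalk hp (p.isSubwalk_dropUntil hz), ← Walk.length_append,
    Walk.take_spec, hp]

theorem dist_add_dist_of_not_reachable_deleteEdges (hG : G.Connected)
    (h : ¬ (G.deleteEdges {s(a, b)}).Reachable x y) :
    G.dist x a + G.dist a y = G.dist x y := by
  obtain ⟨p, hp⟩ := hG.exists_walk_length_eq_dist x y
  have edge_mem : s(a, b) ∈ p.edges := by
    by_contra hne
    exact h (reachable_deleteEdges_iff_exists_walk.2 ⟨p, hne⟩)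
  exact dist_add_dist_of_mem_support hp (p.fst_mem_support_of_mem_edges edge_mem)

end Distance

section Branch

variable {V : Type*} {G : SimpleGraph V} {a v w x y : V}

/-- The branch of `G` at `a` through the neighbour `v`: the vertices of the component of `v` after
the edge `av` is deleted. -/
def branch (G : SimpleGraph V) (a v : V) : Set V :=
  {x | (G.deleteEdges {s(a, v)}).Reachable v x}

theorem self_mem_branch : v ∈ branch G a v :=
  Reachable.refl v

theorem dist_eq_add_of_mem_branch_of_notMem (hG : G.Connected) (hx : x ∈ branch G a v)
    (hy : y ∉ branch G a v) : G.dist x y = G.dist a x + G.dist a y := by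
  rw [G.dist_comm (u := a) (v := x)]
  exact (dist_add_dist_of_not_reachable_deleteEdges hG fun hxy => hy (hx.trans hxy)).symm

theorem exists_adj_mem_branch (hG : G.Connected) (hx : a ≠ x) :
    ∃ v, G.Adj a v ∧ x ∈ branch G a v := by
  obtain ⟨p, hp⟩ := hG.exists_walk_length_eq_dist a x
  cases p with
  | nil => exact absurd rfl hx
  | @cons _ v _ hav q =>
    refine ⟨v, hav, ?_⟩
    by_contra hxv
    have through_a := dist_add_dist_of_not_reachable_deleteEdges hG hxv
    have := G.dist_le q
    rw [Walk.length_cons] at hp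
    omega

theorem dist_eq_dist_add_one_of_mem_branch (hG : G.Connected) (hav : G.Adj a v)
    (hb : G.IsBridge s(a, v)) (hx : x ∈ branch G a v) : G.dist a x = G.dist v x + 1 := by
  have separated : ¬ (G.deleteEdges {s(v, a)}).Reachable a x := by
    rw [Sym2.eq_swap]
    exact fun hax => isBridge_iff.1 hb (hax.trans hx.symm)
  rw [← dist_add_dist_of_not_reachable_deleteEdges hG separated, dist_eq_one_iff_adj.2 hav,
    add_comm]

theorem dist_lt_add_of_mem_branch (hG : G.Connected) (hav : G.Adj a v)
    (hb : G.IsBridge s(a, v)) (hx : x ∈ branch G a v) (hy : y ∈ branch G a v) :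
    G.dist x y < G.dist a x + G.dist a y := by
  have through_v := hG.dist_triangle (u := x) (v := v) (w := y)
  rw [G.dist_comm (u := x) (v := v)] at through_v
  have := dist_eq_dist_add_one_of_mem_branch hG hav hb hx
  have := dist_eq_dist_add_one_of_mem_branch hG hav hb hy
  omega

theorem eq_of_mem_branch_of_mem_branch (hG : G.Connected) (hav : G.Adj a v) (haw : G.Adj a w)
    (hbv : G.IsBridge s(a, v)) (hbw : G.IsBridge s(a, w)) (hxv : x ∈ branch G a v)
    (hxw : x ∈ branch G a w) : v = w := by
  have dist_aw : G.dist a w = 1 := dist_eq_one_iff_adj.2 haw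
  by_cases hw : w ∈ branch G a v
  · have := dist_eq_dist_add_one_of_mem_branch hG hav hbv hw
    exact hG.dist_eq_zero_iff.1 (by omega)
  · have := dist_eq_add_of_mem_branch_of_notMem hG hxv hw
    have := dist_lt_add_of_mem_branch hG haw hbw hxw self_mem_branch
    omega

theorem dist_deleteEdges_of_mem_branch (hG : G.Connected) (hav : G.Adj a v)
    (hb : G.IsBridge s(a, v)) (hx : x ∈ branch G a v) :
    (G.deleteEdges {s(a, v)}).dist v x = G.dist v x := by
  refine le_antisymm ?_ (hx.dist_anti (deleteEdges_le _))
  obtain ⟨p, hp⟩ := hG.exists_walk_length_eq_dist v x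
  -- A geodesic from `v` to `x` through `a` would put `x` closer to `a` than to `v`.
  have avoids_edge : ∀ e ∈ p.edges, e ∉ ({s(a, v)} : Set (Sym2 V)) := by
    rintro _ he rfl
    have := dist_add_dist_of_mem_support hp (p.fst_mem_support_of_mem_edges he)
    have := dist_eq_dist_add_one_of_mem_branch hG hav hb hx
    omega
  calc (G.deleteEdges {s(a, v)}).dist v x
      ≤ (p.toDeleteEdges _ avoids_edge).length := dist_le _
    _ = G.dist v x := by rw [← hp, Walk.toDeleteEdges, Walk.length_transfer]

theorem isGreatest_eccWithin [Fintype V] (G : SimpleGraph V) (v : V) :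
    IsGreatest (G.dist v '' {x | G.Reachable v x}) (eccWithin G v) := by
  classical
  constructor
  · obtain ⟨x, -, hx⟩ : ∃ x ∈ univ, eccWithin G v = _ := exists_mem_eq_sup univ ⟨v, mem_univ v⟩ _
    split_ifs at hx with hvx
    · exact ⟨x, hvx, hx.symm⟩
    · exact ⟨v, Reachable.refl v, by rw [hx, dist_self]⟩
  · rintro _ ⟨x, hx, rfl⟩
    refine le_trans ?_ (le_sup (mem_univ x))
    exact (if_pos hx).ge

theorem isGreatest_branchEcc_add_one [Fintype V] [DecidableEq V] (hG : G.Connected)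
    (hav : G.Adj a v) (hb : G.IsBridge s(a, v)) :
    IsGreatest (G.dist a '' branch G a v) (branchEcc G a v + 1) := by
  have dist_eq : ∀ x ∈ branch G a v,
      G.dist a x = (G.deleteEdges {s(a, v)}).dist v x + 1 := fun x hx => by
    rw [dist_eq_dist_add_one_of_mem_branch hG hav hb hx,
      dist_deleteEdges_of_mem_branch hG hav hb hx]
  obtain ⟨⟨z, hz, hz_dist⟩, le_branchEcc⟩ := isGreatest_eccWithin (G.deleteEdges {s(a, v)}) v
  refine ⟨⟨z, hz, by rw [dist_eq z hz, hz_dist, branchEcc]⟩, ?_⟩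
  rintro _ ⟨x, hx, rfl⟩
  rw [dist_eq x hx]
  exact Nat.succ_le_succ (le_branchEcc ⟨x, hx, rfl⟩)

end Branch

section Eccentricity

variable {V : Type*} [Fintype V] {G : SimpleGraph V} {a v x : V}

theorem dist_le_ecc (G : SimpleGraph V) (x y : V) : G.dist x y ≤ ecc G x :=
  le_sup (f := G.dist x) (mem_univ y)

/-- The vertices of the branch at `a` through `v` that are as far from `a` as possible in the whole
graph. When `a` is the centre of a tree of even diameter, these are the ends of the diametrical
paths running through `v`. -/
def diametricEnds (G : SimpleGraph V) (a v : V) : Set V :=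
  {x | x ∈ branch G a v ∧ G.dist a x = ecc G a}

/-- The diametrically distinguished neighbours of `a`, described through the centre `a` rather than
through diametrical paths: those whose branch reaches the greatest distance from `a`. -/
def diametricNeighbors (G : SimpleGraph V) (a : V) : Set V :=
  {v | G.Adj a v ∧ (diametricEnds G a v).Nonempty}

theorem mem_diametricNeighbors_iff_branchEcc [DecidableEq V] (hG : G.Connected)
    (hb : ∀ v, G.Adj a v → G.IsBridge s(a, v)) :
    v ∈ diametricNeighbors G a ↔ G.Adj a v ∧ branchEcc G a v = ecc G a - 1 := by
  refine and_congr_right fun hav => ?_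
  obtain ⟨⟨z, hz, z_deepest⟩, branch_le⟩ := isGreatest_branchEcc_add_one hG hav (hb v hav)
  constructor
  · rintro ⟨x, hx, x_dist⟩
    have := branch_le ⟨x, hx, rfl⟩
    have := dist_le_ecc G a z
    omega
  · intro h
    have := dist_le_ecc G a v
    rw [dist_eq_one_iff_adj.2 hav] at this
    exact ⟨z, hz, by omega⟩

theorem exists_mem_diametricEnds (hG : G.Connected) (ha : ecc G a ≠ 0)
    (hx : G.dist a x = ecc G a) : ∃ v : diametricNeighbors G a, x ∈ diametricEnds G a v := by
  have hax : a ≠ x := by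
    rintro rfl
    exact ha (by rw [← hx, dist_self])
  obtain ⟨v, hav, hxv⟩ := exists_adj_mem_branch hG hax
  exact ⟨⟨v, hav, x, hxv, hx⟩, hxv, hx⟩

theorem mem_branch_iff_eq (hG : G.Connected)
    (hb : ∀ v ∈ diametricNeighbors G a, G.IsBridge s(a, v)) {v w : diametricNeighbors G a}
    (hxw : x ∈ branch G a w) : x ∈ branch G a v ↔ v = w :=
  ⟨fun hxv => Subtype.ext <| eq_of_mem_branch_of_mem_branch hG v.2.1 w.2.1 (hb v v.2) (hb w w.2)
    hxv hxw, fun h => h ▸ hxw⟩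

theorem ecc_eq_ecc_add_dist (hG : G.Connected)
    (hb : ∀ v ∈ diametricNeighbors G a, G.IsBridge s(a, v))
    (hnt : (diametricNeighbors G a).Nontrivial) (x : V) :
    ecc G x = ecc G a + G.dist a x := by
  apply le_antisymm
  · refine Finset.sup_le fun y _ => ?_
    have through_a := hG.dist_triangle (u := x) (v := a) (w := y)
    rw [G.dist_comm (u := x) (v := a)] at through_a
    have := dist_le_ecc G a y
    omega
  · obtain ⟨v, hxv⟩ : ∃ v : diametricNeighbors G a, x ∉ branch G a v := by
      obtain ⟨v, w, hvw⟩ := hnt.coe_sort.exists_pair_ne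
      by_contra! h
      exact hvw ((mem_branch_iff_eq hG hb (h w)).1 (h v))
    obtain ⟨z, hzv, hz⟩ := v.2.2
    calc ecc G a + G.dist a x = G.dist x z := by
          rw [G.dist_comm (u := x), dist_eq_add_of_mem_branch_of_notMem hG hzv hxv, hz]
      _ ≤ ecc G x := dist_le_ecc G x z

end Eccentricity

section EccentricityMatrix

variable {V : Type*} [Fintype V] {G : SimpleGraph V} {a v x y : V}

theorem isSymm_eccMatrix (G : SimpleGraph V) : (eccMatrix G).IsSymm := by
  ext x y
  simp only [transpose_apply, eccMatrix, of_apply, G.dist_comm (u := y), min_comm (ecc G y)]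

theorem eccMatrix_apply_of_dist_ne_ecc (hG : G.Connected)
    (hecc : ∀ x, ecc G x = ecc G a + G.dist a x) (hx : G.dist a x ≠ ecc G a)
    (hy : G.dist a y ≠ ecc G a) : eccMatrix G x y = 0 := by
  have through_a := hG.dist_triangle (u := x) (v := a) (w := y)
  rw [G.dist_comm (u := x) (v := a)] at through_a
  have := dist_le_ecc G a x
  have := dist_le_ecc G a y
  rw [eccMatrix, of_apply, hecc x, hecc y, if_neg (by omega)]

open Classical in
theorem eccMatrix_apply_of_mem_diametricEnds (hG : G.Connected)
    (hecc : ∀ x, ecc G x = ecc G a + G.dist a x) (hav : G.Adj a v)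
    (hb : G.IsBridge s(a, v)) (hx : x ∈ diametricEnds G a v) (y : V) :
    eccMatrix G x y = if y ∈ branch G a v then 0 else (ecc G a + G.dist a y : ℝ) := by
  obtain ⟨hxv, x_deepest⟩ := hx
  have := dist_le_ecc G a y
  rw [eccMatrix, of_apply, hecc x, hecc y]
  split_ifs with h hyv hyv
  · have := dist_lt_add_of_mem_branch hG hav hb hxv hyv
    omega
  · rw [dist_eq_add_of_mem_branch_of_notMem hG hxv hyv, x_deepest, Nat.cast_add]
  · rfl
  · have := dist_eq_add_of_mem_branch_of_notMem hG hxv hyv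
    omega

theorem exists_submatrix_eccMatrix_eq_fromBlocks [DecidableEq (diametricNeighbors G a)]
    (hG : G.Connected) (ha : 2 ≤ ecc G a)
    (hb : ∀ v ∈ diametricNeighbors G a, G.IsBridge s(a, v))
    (hecc : ∀ x, ecc G x = ecc G a + G.dist a x) :
    ∃ e : diametricNeighbors G a → V,
      (eccMatrix G).submatrix (Sum.elim Subtype.val e) (Sum.elim e Subtype.val) =
        fromBlocks
          ((ecc G a + 1 : ℝ) • (completeGraph (diametricNeighbors G a)).adjMatrix ℝ) 0
          ((ecc G a + ecc G a : ℝ) • (completeGraph (diametricNeighbors G a)).adjMatrix ℝ)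
          ((ecc G a + 1 : ℝ) • (completeGraph (diametricNeighbors G a)).adjMatrix ℝ) := by
  choose e he using fun v : diametricNeighbors G a => v.2.2
  have dist_neighbor : ∀ v : diametricNeighbors G a, G.dist a v = 1 := fun v =>
    dist_eq_one_iff_adj.2 v.2.1
  have end_row : ∀ (v : diametricNeighbors G a) {w : diametricNeighbors G a} {y},
      y ∈ branch G a w →
        eccMatrix G (e v) y = if v = w then 0 else (ecc G a + G.dist a y : ℝ) := fun v w y hy => by
    simp only [eccMatrix_apply_of_mem_diametricEnds hG hecc v.2.1 (hb v v.2) (he v),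
      mem_branch_iff_eq hG hb hy]
  refine ⟨e, ?_⟩
  ext (v | v) (w | w)
  · change eccMatrix G v (e w) = _
    rw [(isSymm_eccMatrix G).apply, end_row w self_mem_branch, dist_neighbor]
    simp [eq_comm]
  · have neighbor_not_deepest : ∀ v : diametricNeighbors G a, G.dist a v ≠ ecc G a := fun v => by
      rw [dist_neighbor]
      omega
    exact eccMatrix_apply_of_dist_ne_ecc hG hecc (neighbor_not_deepest v) (neighbor_not_deepest w)
  · change eccMatrix G (e v) (e w) = _
    rw [end_row v (he w).1, (he w).2]
    simp
  · change eccMatrix G (e v) w = _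
    rw [end_row v self_mem_branch, dist_neighbor]
    simp

open Classical in
/-- The incidence matrix of the vertices at distance `ecc G a` from `a` in the branches through the
diametrically distinguished neighbours of `a`. -/
noncomputable def diametricEndMatrix (G : SimpleGraph V) (a : V) :
    Matrix V (diametricNeighbors G a) ℝ :=
  of fun x v => if x ∈ diametricEnds G a v then 1 else 0

open Classical in
/-- The distances between a vertex and the diametrical ends of a branch not containing it, halved
when the vertex is itself at distance `ecc G a` from `a`, since a pair of such vertices contributes
to both summands of `eccMatrix_eq_add`. -/
noncomputable def diametricHeightMatrix (G : SimpleGraph V) (a : V) :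
    Matrix V (diametricNeighbors G a) ℝ :=
  of fun x v => if x ∈ branch G a v then 0
    else if G.dist a x = ecc G a then (ecc G a : ℝ) else ecc G a + G.dist a x

section Factorization

variable [Fintype (diametricNeighbors G a)] {n : Type*}

theorem diametricEndMatrix_mul_apply_of_mem (hG : G.Connected)
    (hb : ∀ v ∈ diametricNeighbors G a, G.IsBridge s(a, v)) (v : diametricNeighbors G a)
    (hx : x ∈ diametricEnds G a v) (M : Matrix (diametricNeighbors G a) n ℝ) (j : n) :
    (diametricEndMatrix G a * M) x j = M v j := by
  have only_v : ∀ w : diametricNeighbors G a, x ∈ diametricEnds G a w → w = v := fun w hw =>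
    (mem_branch_iff_eq hG hb hx.1).1 hw.1
  rw [mul_apply, sum_eq_single v]
  · simp [diametricEndMatrix, hx]
  · intro w _ hwv
    simp [diametricEndMatrix, mt (only_v w) hwv]
  · simp

theorem diametricEndMatrix_mul_apply_of_dist_ne_ecc (hx : G.dist a x ≠ ecc G a)
    (M : Matrix (diametricNeighbors G a) n ℝ) (j : n) :
    (diametricEndMatrix G a * M) x j = 0 := by
  simp [mul_apply, diametricEndMatrix, diametricEnds, hx]

theorem eccMatrix_apply_eq_add_of_dist_eq_ecc (hG : G.Connected) (ha : ecc G a ≠ 0)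
    (hb : ∀ v ∈ diametricNeighbors G a, G.IsBridge s(a, v))
    (hecc : ∀ x, ecc G x = ecc G a + G.dist a x) (hx : G.dist a x = ecc G a) (y : V) :
    eccMatrix G x y = (diametricEndMatrix G a * (diametricHeightMatrix G a)ᵀ) x y +
      (diametricEndMatrix G a * (diametricHeightMatrix G a)ᵀ) y x := by
  classical
  obtain ⟨v, hxv⟩ := exists_mem_diametricEnds hG ha hx
  rw [eccMatrix_apply_of_mem_diametricEnds hG hecc v.2.1 (hb v v.2) hxv,
    diametricEndMatrix_mul_apply_of_mem hG hb v hxv]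
  by_cases hy : G.dist a y = ecc G a
  · obtain ⟨w, hyw⟩ := exists_mem_diametricEnds hG ha hy
    have same_branch : x ∈ branch G a w ↔ y ∈ branch G a v := by
      rw [mem_branch_iff_eq hG hb hxv.1, mem_branch_iff_eq hG hb hyw.1, eq_comm]
    rw [diametricEndMatrix_mul_apply_of_mem hG hb w hyw]
    by_cases hyv : y ∈ branch G a v <;>
      simp [diametricHeightMatrix, same_branch, hyv, hx, hy]
  · rw [diametricEndMatrix_mul_apply_of_dist_ne_ecc hy]
    simp [diametricHeightMatrix, hy]

theorem eccMatrix_eq_add (hG : G.Connected) (ha : ecc G a ≠ 0)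
    (hb : ∀ v ∈ diametricNeighbors G a, G.IsBridge s(a, v))
    (hecc : ∀ x, ecc G x = ecc G a + G.dist a x) :
    eccMatrix G = diametricEndMatrix G a * (diametricHeightMatrix G a)ᵀ +
      diametricHeightMatrix G a * (diametricEndMatrix G a)ᵀ := by
  have transpose_eq : diametricHeightMatrix G a * (diametricEndMatrix G a)ᵀ =
      (diametricEndMatrix G a * (diametricHeightMatrix G a)ᵀ)ᵀ := by
    rw [transpose_mul, transpose_transpose]
  ext x y
  rw [transpose_eq, Matrix.add_apply, transpose_apply]
  by_cases hx : G.dist a x = ecc G a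
  · exact eccMatrix_apply_eq_add_of_dist_eq_ecc hG ha hb hecc hx y
  by_cases hy : G.dist a y = ecc G a
  · rw [(isSymm_eccMatrix G).apply y x,
      eccMatrix_apply_eq_add_of_dist_eq_ecc hG ha hb hecc hy x, add_comm]
  · rw [eccMatrix_apply_of_dist_ne_ecc hG hecc hx hy,
      diametricEndMatrix_mul_apply_of_dist_ne_ecc hx,
      diametricEndMatrix_mul_apply_of_dist_ne_ecc hy, add_zero]

theorem rank_eccMatrix_le (hG : G.Connected) (ha : ecc G a ≠ 0)
    (hb : ∀ v ∈ diametricNeighbors G a, G.IsBridge s(a, v))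
    (hecc : ∀ x, ecc G x = ecc G a + G.dist a x) :
    (eccMatrix G).rank ≤ 2 * Fintype.card (diametricNeighbors G a) := by
  rw [eccMatrix_eq_add hG ha hb hecc, ← fromCols_mul_fromRows, two_mul, ← Fintype.card_sum]
  exact (rank_mul_le_left _ _).trans (rank_le_card_width _)

theorem le_rank_eccMatrix (hG : G.Connected) (ha : 2 ≤ ecc G a)
    (hb : ∀ v ∈ diametricNeighbors G a, G.IsBridge s(a, v))
    (hnt : (diametricNeighbors G a).Nontrivial) :
    2 * Fintype.card (diametricNeighbors G a) ≤ (eccMatrix G).rank := by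
  classical
  obtain ⟨e, minor_eq⟩ :=
    exists_submatrix_eccMatrix_eq_fromBlocks hG ha hb (ecc_eq_ecc_add_dist hG hb hnt)
  have adjMatrix_det_ne_zero :
      ((completeGraph (diametricNeighbors G a)).adjMatrix ℝ).det ≠ 0 := by
    have : Nontrivial (diametricNeighbors G a) := hnt.coe_sort
    have card_gt_one : (1 : ℝ) < Fintype.card (diametricNeighbors G a) := by
      exact_mod_cast Fintype.one_lt_card
    rw [det_adjMatrix_completeGraph]
    exact mul_ne_zero (by simp) (by linarith)
  have minor_det_ne_zero :
      ((eccMatrix G).submatrix (Sum.elim Subtype.val e) (Sum.elim e Subtype.val)).det ≠ 0 := by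
    have scalar_ne_zero : (ecc G a + 1 : ℝ) ≠ 0 := by positivity
    rw [minor_eq, det_fromBlocks_zero₁₂, det_smul]
    exact mul_self_ne_zero.2 (mul_ne_zero (pow_ne_zero _ scalar_ne_zero) adjMatrix_det_ne_zero)
  rw [two_mul, ← Fintype.card_sum, ← rank_of_det_ne_zero minor_det_ne_zero]
  exact rank_submatrix_le _ _ _

end Factorization

theorem rank_eccMatrix (hG : G.Connected) (ha : 2 ≤ ecc G a)
    (hb : ∀ v ∈ diametricNeighbors G a, G.IsBridge s(a, v))
    (hnt : (diametricNeighbors G a).Nontrivial) :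
    (eccMatrix G).rank = 2 * (diametricNeighbors G a).ncard := by
  classical
  rw [← Nat.card_coe_set_eq, Nat.card_eq_fintype_card]
  exact le_antisymm (rank_eccMatrix_le hG (by omega) hb (ecc_eq_ecc_add_dist hG hb hnt))
    (le_rank_eccMatrix hG ha hb hnt)

end EccentricityMatrix

theorem stmt3_general {V ι : Type*} [Fintype V] [DecidableEq V] [Fintype ι] [Nontrivial ι]
    (G : SimpleGraph V) (d : ℕ) (hG : G.Connected) (hd : 2 ≤ d)
    (u₀ : V) (hcen : ecc G u₀ = d) (hbridge : ∀ v : V, G.Adj u₀ v → G.IsBridge s(u₀, v))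
    (u : ι → V) (hinj : Function.Injective u) (hadj : ∀ i : ι, G.Adj u₀ (u i))
    (hbranch : ∀ i : ι, branchEcc G u₀ (u i) = d - 1)
    (hexact : ∀ v : V, G.Adj u₀ v → branchEcc G u₀ v = d - 1 → ∃ i : ι, v = u i) :
    (eccMatrix G).rank = 2 * Fintype.card ι := by
  subst hcen
  have neighbors_eq : diametricNeighbors G u₀ = Set.range u := by
    ext v
    rw [mem_diametricNeighbors_iff_branchEcc hG hbridge]
    constructor
    · rintro ⟨hv, hv'⟩
      obtain ⟨i, rfl⟩ := hexact v hv hv'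
      exact ⟨i, rfl⟩
    · rintro ⟨i, rfl⟩
      exact ⟨hadj i, hbranch i⟩
  have hnt : (diametricNeighbors G u₀).Nontrivial := by
    rw [neighbors_eq, ← Set.image_univ]
    exact Set.nontrivial_univ.image hinj
  rw [rank_eccMatrix hG hd (fun v hv => hbridge v hv.1) hnt, neighbors_eq,
    Set.ncard_range_of_injective hinj, Nat.card_eq_fintype_card]

/-- For a tree with even diameter `2d`, centre `u₀` and `u₁, …, u_l` exactly the neighbours of
`u₀` whose branch has eccentricity `d-1` (the diametrically distinguished vertices), the rank of
the eccentricity matrix is `2l`. -/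
theorem stmt3 {V : Type*} [Fintype V] [DecidableEq V] (T : SimpleGraph V) (n d l : ℕ)
    (hT : T.IsTree) (hn : Fintype.card V = n) (hd : 2 ≤ d) (hdiam : gdiam T = 2*d)
    (u₀ : V) (hcen : ecc T u₀ = d)
    (hl : 2 ≤ l) (u : Fin l → V) (hinj : Function.Injective u)
    (hadj : ∀ i : Fin l, T.Adj u₀ (u i))
    (hbranch : ∀ i : Fin l, branchEcc T u₀ (u i) = d - 1)
    (hexact : ∀ v : V, T.Adj u₀ v → branchEcc T u₀ v = d - 1 → ∃ i : Fin l, v = u i) :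
    (eccMatrix T).rank = 2*l := by
  have : Nontrivial (Fin l) := Fin.nontrivial_iff_two_le.2 hl
  simpa using stmt3_general T d hT.connected hd u₀ hcen
    (fun _ hv => isAcyclic_iff_forall_adj_isBridge.1 hT.isAcyclic hv) u hinj hadj hbranch hexact
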